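/- Let u : ℝⁿ → ℝ be continuous and bounded, let L : ℝⁿ → [0,∞) be a nonnegative C¹ function with L(0) = DL(0) = 0 and L superlinear, and let t > 0. Then at every point x ∈ ℝⁿ and for every direction γ ∈ ℝⁿ with |γ| = 1, the one-sided directional derivative D_γ u_t(x) = lim_{h→0⁺} (u_t(x + hγ) − u_t(x))/h of the infimal convolution u_t exists, and D_γ u_t(x) = inf_{a' ∈ R u_t(x)} ( −D_γ L(a') ), where this infimum is attained at some a ∈ R u_t(x). -/

import Mathlib

open MeasureTheory Filter Metric Set
open scoped RealInnerProductSpace ENNReal Topology NNReal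

noncomputable section

/-- Euclidean space `ℝⁿ`. -/
abbrev Eucl (n : ℕ) := EuclideanSpace ℝ (Fin n)

/-- Infimal convolution (Hopf–Lax formula): `u_t(x) = inf_a ( u(x + t a) + t L(a) )`. -/
def infConv {n : ℕ} (u L : Eucl n → ℝ) (t : ℝ) (x : Eucl n) : ℝ :=
  ⨅ a : Eucl n, (u (x + t • a) + t * L a)

/-- `L` is superlinear: `L x / ‖x‖ → ∞` as `‖x‖ → ∞`. -/
def Superlinear {n : ℕ} (L : Eucl n → ℝ) : Prop :=
  Tendsto (fun x => L x / ‖x‖) (Bornology.cobounded (Eucl n)) atTop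

/-- `g` is the weak (distributional) gradient of `u` on `ℝⁿ`. -/
def HasWeakGradient {n : ℕ} (u : Eucl n → ℝ) (g : Eucl n → Eucl n) : Prop :=
  ∀ φ : Eucl n → ℝ, ContDiff ℝ (⊤ : ℕ∞) φ → HasCompactSupport φ →
    ∀ v : Eucl n, ∫ x, u x * fderiv ℝ φ x v = - ∫ x, φ x * ⟪g x, v⟫

/-- The set `R u_t(x)` of minimizers in the infimal convolution. -/
def minSet {n : ℕ} (u L : Eucl n → ℝ) (t : ℝ) (x : Eucl n) : Set (Eucl n) :=
  {a | infConv u L t x = u (x + t • a) + t * L a}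

/-! Substituting `y = x + t a` turns the infimal convolution into
`u_t(x) = inf_y (u(y) + t L((y - x) / t))`, where `x` enters only through the differentiable
function `L` and not through `u`. The right derivative of such a function `h ↦ inf_y f h y` at `s`
is given by Danskin's envelope theorem: comparison with a fixed minimizer of `f s` bounds its
difference quotients from above, and by the mean value theorem they are bounded from below by values
of `∂f/∂h` at minimizers of `f h`, which by compactness accumulate only at minimizers of `f s`.
Coercivity of `L` confines the minimizers to a compact set. -/

section Minimizers

/-- The set of global minimizers (argmin) of `f`; `R u_t(x)` is such a set up to an affine change of
variable. Unlike the condition `⨅ b, f b = f y`, membership is meaningful without `f` being bounded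
below. -/
def minimizers {Y : Type*} (f : Y → ℝ) : Set Y :=
  {y | ∀ b, f y ≤ f b}

variable {X Y : Type*}

theorem bddBelow_range_of_mem_minimizers {f : Y → ℝ} {y : Y} (hy : y ∈ minimizers f) :
    BddBelow (range f) :=
  ⟨f y, forall_mem_range.2 hy⟩

theorem iInf_eq_of_mem_minimizers {f : Y → ℝ} {y : Y} (hy : y ∈ minimizers f) :
    ⨅ b, f b = f y :=
  have : Nonempty Y := ⟨y⟩
  le_antisymm (ciInf_le (bddBelow_range_of_mem_minimizers hy) y) (le_ciInf hy)

theorem mem_minimizers_iff_iInf_eq {f : Y → ℝ} (hf : BddBelow (range f)) {y : Y} :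
    y ∈ minimizers f ↔ ⨅ b, f b = f y :=
  ⟨iInf_eq_of_mem_minimizers, fun h b => h ▸ ciInf_le hf b⟩

variable [TopologicalSpace X] [TopologicalSpace Y]

theorem inter_minimizers_nonempty_of_isCompact {f : Y → ℝ} (hf : LowerSemicontinuous f) {K : Set Y}
    (hK : IsCompact K) {b : Y} (hbK : b ∈ K) (hb : ∀ y ∉ K, f b ≤ f y) :
    (K ∩ minimizers f).Nonempty := by
  obtain ⟨a, haK, ha⟩ := (hf.lowerSemicontinuousOn K).exists_isMinOn ⟨b, hbK⟩ hK
  refine ⟨a, haK, fun y => ?_⟩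
  by_cases hy : y ∈ K
  · exact ha hy
  · exact (ha hbK).trans (hb y hy)

theorem isClosed_setOf_mem_minimizers {f : X → Y → ℝ}
    (hf : LowerSemicontinuous (Function.uncurry f)) (hfc : ∀ y, Continuous fun x => f x y) :
    IsClosed {p : X × Y | p.2 ∈ minimizers (f p.1)} := by
  have hdiff (b : Y) : LowerSemicontinuous fun p : X × Y => f p.1 p.2 + -f p.1 b :=
    hf.add ((hfc b).comp continuous_fst).neg.lowerSemicontinuous
  convert isClosed_iInter fun b => (hdiff b).isClosed_preimage 0 using 1
  ext p
  simp [minimizers]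

end Minimizers

section Envelope

variable {Y : Type*} {f f' : ℝ → Y → ℝ} {s : ℝ}

theorem slope_iInf_le_slope {h : ℝ} (hs : s < h) {y z : Y} (hy : y ∈ minimizers (f h))
    (hz : z ∈ minimizers (f s)) :
    slope (fun r => ⨅ b, f r b) s h ≤ slope (f · z) s h := by
  simp only [slope_def_field, iInf_eq_of_mem_minimizers hy, iInf_eq_of_mem_minimizers hz]
  exact div_le_div_of_nonneg_right (sub_le_sub_right (hy z) _) (sub_pos.2 hs).le

variable [TopologicalSpace Y]

theorem eventually_mul_sub_lt_of_lt_deriv (hf : ∀ h y, HasDerivAt (f · y) (f' h y) h) {y : Y}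
    (hf' : ContinuousAt (Function.uncurry f') (s, y)) {c : ℝ} (hc : c < f' s y) :
    ∀ᶠ p in 𝓝 (s, y), s < p.1 → c * (p.1 - s) < f p.1 p.2 - f s p.2 := by
  have hnear : ∀ᶠ p in 𝓝 s ×ˢ 𝓝 y, c < f' p.1 p.2 := by
    rw [← nhds_prod_eq]
    exact hf'.eventually_const_lt hc
  obtain ⟨P, hP, Q, hQ, hPQ⟩ := eventually_prod_iff.1 hnear
  obtain ⟨ε, hε, hball⟩ := Metric.eventually_nhds_iff_ball.1 hP
  rw [nhds_prod_eq]
  filter_upwards [prod_mem_prod (ball_mem_nhds s hε) hQ] with ⟨h, z⟩ ⟨hh, hz⟩ hlt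
  refine (convex_ball s ε).mul_sub_lt_image_sub_of_lt_deriv (f := (f · z))
    (fun r _ => (hf r z).continuousAt.continuousWithinAt)
    (fun r _ => (hf r z).differentiableAt.differentiableWithinAt) (fun r hr => ?_)
    s (mem_ball_self hε) h hh hlt
  rw [(hf r z).deriv]
  exact hPQ (hball r (interior_subset hr)) hz

theorem eventually_lt_slope_iInf {K : Set Y} (hK : IsCompact K)
    (hlsc : LowerSemicontinuous (Function.uncurry f)) (hf : ∀ h y, HasDerivAt (f · y) (f' h y) h)
    (hf' : Continuous (Function.uncurry f'))
    (hmin : ∀ᶠ h in 𝓝[≥] s, (K ∩ minimizers (f h)).Nonempty)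
    {c : ℝ} (hc : ∀ y ∈ K ∩ minimizers (f s), c < f' s y) :
    ∀ᶠ h in 𝓝[>] s, c < slope (fun r => ⨅ b, f r b) s h := by
  have hclosed := isClosed_setOf_mem_minimizers hlsc fun y =>
    continuous_iff_continuousAt.2 fun h => (hf h y).continuousAt
  have hincrement : ∀ᶠ h in 𝓝 s, ∀ z ∈ K,
      s < h → z ∈ minimizers (f h) → c * (h - s) < f h z - f s z := by
    refine hK.eventually_forall_of_forall_eventually fun y hyK => ?_
    by_cases hy : y ∈ minimizers (f s)
    · filter_upwards [eventually_mul_sub_lt_of_lt_deriv hf hf'.continuousAt (hc y ⟨hyK, hy⟩)]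
        with p hp hlt _ using hp hlt
    · filter_upwards [hclosed.isOpen_compl.mem_nhds hy] with p hp _ hpmin
      exact absurd hpmin hp
  obtain ⟨a, -, ha⟩ := hmin.self_of_nhdsWithin self_mem_Ici
  filter_upwards [hmin.filter_mono (nhdsWithin_mono s Ioi_subset_Ici_self),
    hincrement.filter_mono nhdsWithin_le_nhds, self_mem_nhdsWithin] with h ⟨y, hyK, hy⟩ hlt hs
  rw [slope_def_field, lt_div_iff₀ (sub_pos.2 hs), iInf_eq_of_mem_minimizers hy,
    iInf_eq_of_mem_minimizers ha]
  exact (hlt y hyK hs hy).trans_le (sub_le_sub_left (ha y) _)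

/-- **Danskin's envelope theorem**. -/
theorem exists_hasDerivWithinAt_iInf {K : Set Y} (hK : IsCompact K)
    (hlsc : LowerSemicontinuous (Function.uncurry f)) (hf : ∀ h y, HasDerivAt (f · y) (f' h y) h)
    (hf' : Continuous (Function.uncurry f'))
    (hmin : ∀ᶠ h in 𝓝[≥] s, (K ∩ minimizers (f h)).Nonempty) :
    ∃ a ∈ minimizers (f s), HasDerivWithinAt (fun h => ⨅ y, f h y) (f' s a) (Ioi s) s ∧
      IsLeast (f' s '' minimizers (f s)) (f' s a) := by
  have hclosed : IsClosed (minimizers (f s)) :=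
    (isClosed_setOf_mem_minimizers hlsc fun y => continuous_iff_continuousAt.2 fun h =>
      (hf h y).continuousAt).preimage (Continuous.prodMk_right s)
  obtain ⟨a, ⟨-, ha⟩, hleast⟩ := (hK.inter_right hclosed).exists_isMinOn
    (hmin.self_of_nhdsWithin self_mem_Ici) (hf'.comp (Continuous.prodMk_right s)).continuousOn
  have hupper (z : Y) (hz : z ∈ minimizers (f s)) :
      ∀ᶠ h in 𝓝[>] s, slope (fun r => ⨅ b, f r b) s h ≤ slope (f · z) s h := by
    filter_upwards [hmin.filter_mono (nhdsWithin_mono s Ioi_subset_Ici_self),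
      self_mem_nhdsWithin] with h ⟨y, _, hy⟩ hs using slope_iInf_le_slope hs hy hz
  have hslope (z : Y) : Tendsto (slope (f · z) s) (𝓝[>] s) (𝓝 (f' s z)) :=
    (hasDerivWithinAt_iff_tendsto_slope' self_notMem_Ioi).1 (hf s z).hasDerivWithinAt
  have hlim : Tendsto (slope (fun r => ⨅ b, f r b) s) (𝓝[>] s) (𝓝 (f' s a)) := by
    refine tendsto_order.2 ⟨fun c hc => ?_, fun c hc => ?_⟩
    · exact eventually_lt_slope_iInf hK hlsc hf hf' hmin fun y hy => hc.trans_le (hleast hy)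
    · filter_upwards [hupper a ha, (hslope a).eventually_lt_const hc] with h using lt_of_le_of_lt
  exact ⟨a, ha, (hasDerivWithinAt_iff_tendsto_slope' self_notMem_Ioi).2 hlim, mem_image_of_mem _ ha,
    forall_mem_image.2 fun z hz => le_of_tendsto_of_tendsto hlim (hslope z) (hupper z hz)⟩

end Envelope

theorem Superlinear.tendsto_atTop {n : ℕ} {L : Eucl n → ℝ} (hL : Superlinear L) :
    Tendsto L (Bornology.cobounded (Eucl n)) atTop := by
  refine (Tendsto.atTop_mul_atTop₀ hL tendsto_norm_cobounded_atTop).congr' ?_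
  filter_upwards [tendsto_norm_cobounded_atTop.eventually_gt_atTop 0] with x hx
  exact div_mul_cancel₀ _ hx.ne'

section HopfLax

variable {E : Type*} [NormedAddCommGroup E] [NormedSpace ℝ E] {u L : E → ℝ} {t : ℝ}

/-- The cost `u(y) + t L((y - x) / t)` of moving from `x` to `y` in time `t`. It is the function
minimized in the infimal convolution `u_t(x)`, expressed through the end point `y = x + t a`. -/
def hopfLaxCost (u L : E → ℝ) (t : ℝ) (x y : E) : ℝ :=
  u y + t * L (t⁻¹ • (y - x))

theorem hopfLaxCost_add_smul (ht : t ≠ 0) (x a : E) :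
    hopfLaxCost u L t x (x + t • a) = u (x + t • a) + t * L a := by
  simp [hopfLaxCost, ht]

theorem lowerSemicontinuous_hopfLaxCost (hu : LowerSemicontinuous u) (hL : Continuous L) (t : ℝ) :
    LowerSemicontinuous (Function.uncurry (hopfLaxCost u L t)) :=
  (hu.comp continuous_snd).add (Continuous.lowerSemicontinuous (by fun_prop))

theorem hasDerivAt_hopfLaxCost_add_smul (hL : Differentiable ℝ L) (ht : t ≠ 0) (x γ y : E) (h : ℝ) :
    HasDerivAt (fun r : ℝ => hopfLaxCost u L t (x + r • γ) y)
      (-fderiv ℝ L (t⁻¹ • (y - (x + h • γ))) γ) h := by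
  have hline : HasDerivAt (fun r : ℝ => t⁻¹ • (y - (x + r • γ))) (-(t⁻¹ • γ)) h := by
    simpa using ((((hasDerivAt_id h).smul_const γ).const_add x).const_sub y).fun_const_smul t⁻¹
  have hscale (ℓ : E →L[ℝ] ℝ) : -ℓ γ = t * ℓ (-(t⁻¹ • γ)) := by simp [ht]
  rw [hscale]
  exact (((hL _).hasFDerivAt.comp_hasDerivAt h hline).const_mul t).const_add (u y)

theorem tendsto_inv_smul_sub_cobounded (ht : t ≠ 0) (x : E) :
    Tendsto (fun p : E × E => t⁻¹ • (p.2 - p.1)) (𝓝 x ×ˢ Bornology.cobounded E)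
      (Bornology.cobounded E) := by
  rw [← tendsto_norm_atTop_iff_cobounded]
  have hdiff : Tendsto (fun p : E × E => ‖p.2‖ + -‖p.1‖) (𝓝 x ×ˢ Bornology.cobounded E) atTop :=
    (tendsto_norm_cobounded_atTop.comp tendsto_snd).atTop_add tendsto_fst.norm.neg
  refine tendsto_atTop_mono (fun p => ?_) (hdiff.const_mul_atTop (norm_pos_iff.2 (inv_ne_zero ht)))
  rw [norm_smul, ← sub_eq_add_neg]
  gcongr
  exact norm_sub_norm_le _ _

theorem tendsto_hopfLaxCost_atTop (hu : BddBelow (range u))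
    (hL : Tendsto L (Bornology.cobounded E) atTop) (ht : 0 < t) (x : E) :
    Tendsto (Function.uncurry (hopfLaxCost u L t)) (𝓝 x ×ˢ Bornology.cobounded E) atTop := by
  obtain ⟨m, hm⟩ := hu
  exact tendsto_atTop_add_left_of_le _ m (fun p => hm (mem_range_self p.2))
    ((hL.comp (tendsto_inv_smul_sub_cobounded ht.ne' x)).const_mul_atTop ht)

theorem exists_isCompact_eventually_inter_minimizers_hopfLaxCost_nonempty [ProperSpace E]
    (hu : LowerSemicontinuous u) (hu_bdd : BddBelow (range u)) (hLc : Continuous L)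
    (hL : Tendsto L (Bornology.cobounded E) atTop) (ht : 0 < t) (x : E) :
    ∃ K : Set E, IsCompact K ∧
      ∀ᶠ x' in 𝓝 x, (K ∩ minimizers (hopfLaxCost u L t x')).Nonempty := by
  obtain ⟨P, hP, Q, hQ, hPQ⟩ := eventually_prod_iff.1 <|
    (tendsto_hopfLaxCost_atTop hu_bdd hL ht x).eventually_ge_atTop (hopfLaxCost u L t x x + 1)
  have hnear : ∀ᶠ x' in 𝓝 x, hopfLaxCost u L t x' x < hopfLaxCost u L t x x + 1 := by
    have hcont : Continuous fun x' => hopfLaxCost u L t x' x := by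
      unfold hopfLaxCost
      fun_prop
    exact hcont.continuousAt.eventually_lt_const (lt_add_one _)
  obtain ⟨r, -, hr⟩ := (hasBasis_cobounded_compl_closedBall x).eventually_iff.1 hQ
  refine ⟨closedBall x (max r 0), isCompact_closedBall _ _, ?_⟩
  filter_upwards [hP, hnear] with x' hx' hlt
  refine inter_minimizers_nonempty_of_isCompact
    ((lowerSemicontinuous_hopfLaxCost hu hLc t).comp (Continuous.prodMk_right x'))
    (isCompact_closedBall _ _) (mem_closedBall_self (le_max_right r 0)) (fun y hy => ?_)
  have hyr : y ∉ closedBall x r := fun h => hy (closedBall_subset_closedBall (le_max_left r 0) h)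
  exact hlt.le.trans (hPQ hx' (hr hyr))

end HopfLax

section InfConv

variable {n : ℕ} {u L : Eucl n → ℝ} {t : ℝ}

theorem infConv_eq_iInf_hopfLaxCost (ht : t ≠ 0) (x : Eucl n) :
    infConv u L t x = ⨅ y, hopfLaxCost u L t x y :=
  ((Homeomorph.smulOfNeZero t ht).trans (Homeomorph.addLeft x)).surjective.iInf_congr _
    (hopfLaxCost_add_smul ht x)

theorem minSet_eq_image_minimizers (ht : t ≠ 0) {x : Eucl n}
    (hbdd : BddBelow (range (hopfLaxCost u L t x))) :
    minSet u L t x = (fun y => t⁻¹ • (y - x)) '' minimizers (hopfLaxCost u L t x) := by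
  have hmem (a : Eucl n) :
      a ∈ minSet u L t x ↔ x + t • a ∈ minimizers (hopfLaxCost u L t x) := by
    rw [mem_minimizers_iff_iInf_eq hbdd, ← infConv_eq_iInf_hopfLaxCost ht,
      hopfLaxCost_add_smul ht, minSet, mem_ofPred_eq]
  ext a
  rw [hmem, mem_image]
  constructor
  · exact fun ha => ⟨_, ha, by simp [ht]⟩
  · rintro ⟨y, hy, rfl⟩
    simpa [ht] using hy

end InfConv

theorem stmt5_general {n : ℕ}
    (u : Eucl n → ℝ) (hu_lsc : LowerSemicontinuous u) (hu_bdd : BddBelow (range u))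
    (L : Eucl n → ℝ) (hL_C1 : ContDiff ℝ 1 L)
    (hL_coercive : Tendsto L (Bornology.cobounded (Eucl n)) atTop)
    (t : ℝ) (ht : 0 < t) (x γ : Eucl n) :
    ∃ a ∈ minSet u L t x,
      Tendsto (fun h : ℝ => (infConv u L t (x + h • γ) - infConv u L t x) / h)
        (𝓝[>] 0) (𝓝 (-⟪gradient L a, γ⟫)) ∧
      IsLeast ((fun a' => -⟪gradient L a', γ⟫) '' minSet u L t x) (-⟪gradient L a, γ⟫) := by
  obtain ⟨K, hK, hmin⟩ := exists_isCompact_eventually_inter_minimizers_hopfLaxCost_nonempty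
    hu_lsc hu_bdd hL_C1.continuous hL_coercive ht x
  have hline : Continuous fun h : ℝ => x + h • γ := by fun_prop
  have hmin_line : ∀ᶠ h in 𝓝 (0 : ℝ),
      (K ∩ minimizers (hopfLaxCost u L t (x + h • γ))).Nonempty :=
    (hline.tendsto' 0 x (by simp)).eventually hmin
  have hlsc : LowerSemicontinuous
      (Function.uncurry fun (h : ℝ) y => hopfLaxCost u L t (x + h • γ) y) :=
    (lowerSemicontinuous_hopfLaxCost hu_lsc hL_C1.continuous t).comp (hline.prodMap continuous_id)
  obtain ⟨y, hy, hderiv, hleast⟩ := exists_hasDerivWithinAt_iInf hK hlsc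
    (fun h y => hasDerivAt_hopfLaxCost_add_smul (hL_C1.differentiable one_ne_zero) ht.ne' x γ y h)
    (by fun_prop) (hmin_line.filter_mono nhdsWithin_le_nhds)
  have hgrad (a : Eucl n) : ⟪gradient L a, γ⟫ = fderiv ℝ L a γ := by simp [gradient]
  simp only [zero_smul, add_zero] at hy hderiv hleast
  simp only [hgrad, minSet_eq_image_minimizers ht.ne' (bddBelow_range_of_mem_minimizers hy),
    image_image, infConv_eq_iInf_hopfLaxCost ht.ne']
  refine ⟨_, mem_image_of_mem _ hy, ?_, hleast⟩
  simpa [slope_fun_def_field] using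
    (hasDerivWithinAt_iff_tendsto_slope' self_notMem_Ioi).1 hderiv

/-- Lemma 2.1. For continuous bounded `u`, `t > 0`, every `x` and every
unit direction `γ`, the one-sided directional derivative `D_γ u_t(x)` exists and equals
`inf_{a' ∈ R u_t(x)} ( −D_γ L(a') )`, the infimum being attained at some `a ∈ R u_t(x)`. -/
theorem stmt5 {n : ℕ}
    (u : Eucl n → ℝ) (hu_cont : Continuous u) (hu_bdd : ∃ M, ∀ x, |u x| ≤ M)
    (L : Eucl n → ℝ) (hL_nonneg : ∀ x, 0 ≤ L x) (hL_C1 : ContDiff ℝ 1 L)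
    (hL0 : L 0 = 0) (hDL0 : gradient L 0 = 0) (hL_sl : Superlinear L)
    (t : ℝ) (ht : 0 < t) (x γ : Eucl n) (hγ : ‖γ‖ = 1) :
    ∃ a ∈ minSet u L t x,
      Tendsto (fun h : ℝ => (infConv u L t (x + h • γ) - infConv u L t x) / h)
        (𝓝[>] 0) (𝓝 (-⟪gradient L a, γ⟫)) ∧
      IsLeast ((fun a' => -⟪gradient L a', γ⟫) '' minSet u L t x) (-⟪gradient L a, γ⟫) := by
  obtain ⟨M, hM⟩ := hu_bdd
  exact stmt5_general u hu_cont.lowerSemicontinuous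
    ⟨-M, forall_mem_range.2 fun y => (abs_le.1 (hM y)).1⟩ L hL_C1 hL_sl.tendsto_atTop t ht x γ
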